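/- Let n ≥ 2 and let K_1, …, K_{n-2} be nonempty compact convex subsets of ℝ^n. Then there exist orthonormal vectors v_1, v_2 ∈ ℝ^n such that w_{K_i}(v_1) = w_{K_i}(v_2) for every i = 1, …, n-2. (Equivalently, there is an orthogonal decomposition ℝ^n = ℝ^2 ⊕ ℝ^{n-2} such that each region is inscribed in S × ℝ^{n-2} where S is a square.) -/

import Mathlib

open scoped RealInnerProductSpace

/-- The width of a set `K ⊆ ℝⁿ` in direction `v`:
`w_K(v) = sup_{x ∈ K} ⟪x, v⟫ − inf_{x ∈ K} ⟪x, v⟫`. -/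
noncomputable def dirWidth {n : ℕ} (K : Set (EuclideanSpace ℝ (Fin n)))
    (v : EuclideanSpace ℝ (Fin n)) : ℝ :=
  sSup ((fun x => ⟪x, v⟫) '' K) - sInf ((fun x => ⟪x, v⟫) '' K)

namespace BU
open Finsupp

/-- mod 2 chains on ordered tuples -/
abbrev Ch (E : Type) := List E →₀ ZMod 2

section
variable {E F : Type}

noncomputable def sg (l : List E) : Ch E := Finsupp.single l 1

noncomputable def lin {M : Type} [AddCommGroup M] [Module (ZMod 2) M] (f : List E → M) :
    Ch E →ₗ[ZMod 2] M := Finsupp.linearCombination (ZMod 2) f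

lemma lin_sg {M : Type} [AddCommGroup M] [Module (ZMod 2) M] (f : List E → M) (l : List E) :
    lin f (sg l) = f l := by
  simp [lin, sg]

lemma hext {M : Type} [AddCommGroup M] [Module (ZMod 2) M] {A B : Ch E →ₗ[ZMod 2] M}
    (h : ∀ l, A (sg l) = B (sg l)) : A = B := by
  apply Finsupp.lhom_ext'
  intro l
  apply LinearMap.ext_ring
  exact h l

noncomputable def cone (x : E) : Ch E →ₗ[ZMod 2] Ch E := lin (fun l => sg (x :: l))
noncomputable def mp (f : E → F) : Ch E →ₗ[ZMod 2] Ch F := lin (fun l => sg (l.map f))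

noncomputable def bdL : List E → Ch E
  | [] => 0
  | x :: l => sg l + cone x (bdL l)

noncomputable def bd : Ch E →ₗ[ZMod 2] Ch E := lin bdL

lemma bd_nil : bd (sg ([] : List E)) = 0 := by simp [bd, lin_sg, bdL]
lemma bd_cons (x : E) (l : List E) : bd (sg (x :: l)) = sg l + cone x (bd (sg l)) := by
  simp [bd, lin_sg, bdL]
lemma cone_sg (x : E) (l : List E) : cone x (sg l) = sg (x :: l) := by simp [cone, lin_sg]
lemma mp_sg (f : E → F) (l : List E) : mp f (sg l) = sg (l.map f) := by simp [mp, lin_sg]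

lemma two {M : Type} [AddCommGroup M] [Module (ZMod 2) M] (a : M) : a + a = 0 :=
  ZModModule.add_self a

lemma bd_cone (x : E) (c : Ch E) : bd (cone x c) = c + cone x (bd c) := by
  have : bd ∘ₗ cone x = LinearMap.id + cone x ∘ₗ bd := by
    apply hext; intro l
    simp [cone_sg, bd_cons]
  exact LinearMap.congr_fun this c

lemma bd_bd (c : Ch E) : bd (bd c) = 0 := by
  have : (bd ∘ₗ bd : Ch E →ₗ[ZMod 2] Ch E) = 0 := by
    apply hext; intro l
    simp only [LinearMap.comp_apply, LinearMap.zero_apply]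
    induction l with
    | nil => simp [bd_nil]
    | cons x l ih => rw [bd_cons, map_add, bd_cone, ih, map_zero, add_zero, two]
  exact LinearMap.congr_fun this c

lemma mp_cone (f : E → F) (x : E) (c : Ch E) : mp f (cone x c) = cone (f x) (mp f c) := by
  have : mp f ∘ₗ cone x = cone (f x) ∘ₗ mp f := by
    apply hext; intro l
    simp [cone_sg, mp_sg]
  exact LinearMap.congr_fun this c

lemma bd_mp (f : E → F) (c : Ch E) : bd (mp f c) = mp f (bd c) := by
  have : bd ∘ₗ mp f = mp f ∘ₗ bd := by
    apply hext; intro l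
    simp only [LinearMap.comp_apply]
    induction l with
    | nil => simp [mp_sg, bd_nil]
    | cons x l ih =>
      rw [mp_sg] at ih
      rw [mp_sg, List.map_cons, bd_cons, bd_cons, ih, map_add, mp_cone, mp_sg]
  exact LinearMap.congr_fun this c

lemma mp_mp {G : Type} (f : E → F) (g : F → G) (c : Ch E) : mp g (mp f c) = mp (g ∘ f) c := by
  have : mp g ∘ₗ mp f = mp (g ∘ f) := by
    apply hext; intro l
    simp [mp_sg]
  exact LinearMap.congr_fun this c

lemma mp_id (f : E → E) (hf : ∀ x, f x = x) (c : Ch E) : mp f c = c := by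
  have : mp f = LinearMap.id := by
    apply hext; intro l
    have : f = id := funext hf
    simp [mp_sg, this]
  exact LinearMap.congr_fun this c

noncomputable def prL (f g : E → F) : List E → Ch F
  | [] => 0
  | x :: l => sg (f x :: g x :: l.map g) + cone (f x) (prL f g l)

noncomputable def pr (f g : E → F) : Ch E →ₗ[ZMod 2] Ch F := lin (prL f g)

lemma pr_nil (f g : E → F) : pr f g (sg []) = 0 := by simp [pr, lin_sg, prL]
lemma pr_cons (f g : E → F) (x : E) (l : List E) : pr f g (sg (x :: l)) =
    sg (f x :: g x :: l.map g) + cone (f x) (pr f g (sg l)) := by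
  simp [pr, lin_sg, prL]

lemma pr_cone (f g : E → F) (x : E) (c : Ch E) : pr f g (cone x c) =
    cone (f x) (cone (g x) (mp g c)) + cone (f x) (pr f g c) := by
  have : pr f g ∘ₗ cone x =
    cone (f x) ∘ₗ (cone (g x)) ∘ₗ (mp g) + cone (f x) ∘ₗ (pr f g) := by
    apply hext; intro l
    simp [cone_sg, mp_sg, pr_cons]
  exact LinearMap.congr_fun this c

lemma bd_pr (f g : E → F) (c : Ch E) : bd (pr f g c) + pr f g (bd c) = mp f c + mp g c := by
  have : bd ∘ₗ pr f g + pr f g ∘ₗ bd = mp f + mp g := by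
    apply hext; intro l
    simp only [LinearMap.comp_apply, LinearMap.add_apply]
    induction l with
    | nil => simp [mp_sg, bd_nil, pr_nil, two]
    | cons x l ih =>
      have e : bd (pr f g (sg l)) = mp f (sg l) + mp g (sg l) + pr f g (bd (sg l)) := by
        rw [← ih, add_assoc, two, add_zero]
      rw [pr_cons, map_add, bd_cons, bd_cons, bd_cone, bd_cons x l, map_add (pr f g), pr_cone, e]
      simp only [map_add, mp_sg, cone_sg, List.map_cons, ← bd_mp]
      have h1 := two (sg (f x :: l.map g))
      have h2 := two (pr f g (sg l))
      have h3 := two (cone (f x) (cone (g x) (bd (sg (l.map g)))))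
      have h4 := two (cone (f x) (pr f g (bd (sg l))))
      linear_combination (norm := abel) h1 + h2 + h3 + h4
  exact LinearMap.congr_fun this c

/-- cochains -/
def uh (f : E → ZMod 2) : List E → ZMod 2
  | [] => 0
  | x :: _ => f x

noncomputable def psi (u : ℕ → E → ZMod 2) : ℕ → (Ch E →ₗ[ZMod 2] ZMod 2)
  | 0 => lin (fun l : List E => (if l.length = 0 then 1 else 0 : ZMod 2)) ∘ₗ bd
  | k + 1 => lin (fun l => uh (u k) l * psi u k (sg l)) ∘ₗ bd

noncomputable def phi (u : ℕ → E → ZMod 2) (k : ℕ) : Ch E →ₗ[ZMod 2] ZMod 2 :=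
  lin (fun l => uh (u k) l * psi u k (sg l))

variable (u : ℕ → E → ZMod 2)

lemma psi_succ (k : ℕ) (c : Ch E) : psi u (k + 1) c = phi u k (bd c) := rfl

lemma phi_cons (k : ℕ) (x : E) (l : List E) :
    phi u k (sg (x :: l)) = u k x * psi u k (sg (x :: l)) := by
  simp [phi, lin_sg, uh]
lemma phi_nil (k : ℕ) : phi u k (sg []) = 0 := by
  simp [phi, lin_sg, uh]

lemma psi_bd (k : ℕ) (c : Ch E) : psi u k (bd c) = 0 := by
  cases k <;> simp [psi, bd_bd]

lemma psi_nil (k : ℕ) : psi u k (sg []) = 0 := by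
  cases k <;> simp [psi, bd_nil]

lemma phi_cone (k : ℕ) (x : E) (c : Ch E) :
    phi u k (cone x c) = u k x * psi u k (cone x c) := by
  have : phi u k ∘ₗ cone x = u k x • (psi u k ∘ₗ cone x) := by
    apply hext; intro l
    simp [cone_sg, phi_cons]
  exact LinearMap.congr_fun this c

lemma psi_zero_one (x : E) : psi u 0 (sg [x]) = 1 := by
  simp [psi, bd_cons, bd_nil, lin_sg]

lemma psi_zero_cons (x y : E) (l : List E) : psi u 0 (sg (x :: y :: l)) = 0 := by
  have h : ∀ c : Ch E, lin (fun l : List E => (if l.length = 0 then 1 else 0 : ZMod 2)) (cone x c) = 0 := by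
    intro c
    have : lin (fun l : List E => (if l.length = 0 then 1 else 0 : ZMod 2)) ∘ₗ (cone x) = 0 := by
      apply hext; intro l; simp [cone_sg, lin_sg]
    exact LinearMap.congr_fun this c
  simp only [psi, LinearMap.comp_apply]
  rw [bd_cons, map_add, h, lin_sg]; simp

lemma psi_succ_one (k : ℕ) (x : E) : psi u (k + 1) (sg [x]) = 0 := by
  simp [psi_succ, bd_cons, bd_nil, phi_nil]

lemma psi_succ_cons (k : ℕ) (x y : E) (l : List E) : psi u (k + 1) (sg (x :: y :: l)) =
    (u k x + u k y) * psi u k (sg (y :: l)) := by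
  rw [psi_succ, bd_cons, map_add, phi_cons, phi_cone]
  have h := psi_bd u k (sg (x :: y :: l))
  rw [bd_cons, map_add] at h
  have h2 := two (psi u k (sg (y :: l)))
  linear_combination u k x * h - u k x * h2

lemma psi_map (S : Set E) (T : E → E) (hu : ∀ k, ∀ x ∈ S, u k (T x) = u k x + 1) (k : ℕ) :
    ∀ l : List E, (∀ x ∈ l, x ∈ S) → psi u k (sg (l.map T)) = psi u k (sg l) := by
  induction k with
  | zero =>
    intro l _
    match l with
    | [] => rfl
    | [x] => simp [psi_zero_one]
    | x :: y :: l => simp [psi_zero_cons]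
  | succ k ih =>
    intro l hl
    match l, hl with
    | [], _ => rfl
    | [x], _ => simp [psi_succ_one]
    | x :: y :: l, hl =>
      have := ih (y :: l) (fun z hz => hl z (List.mem_cons_of_mem _ hz))
      simp only [List.map_cons] at this ⊢
      rw [psi_succ_cons, psi_succ_cons, this, hu k x (hl x (by simp)), hu k y (hl y (by simp))]
      have := two (1 : ZMod 2)
      linear_combination (psi u k (sg (y :: l))) * this

/-- chains supported on lists satisfying P -/
noncomputable def Sup (P : List E → Prop) : Submodule (ZMod 2) (Ch E) := Submodule.span _ (sg '' {l | P l})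

lemma sg_mem {P : List E → Prop} {l : List E} (h : P l) : sg l ∈ Sup P :=
  Submodule.subset_span ⟨l, h, rfl⟩

lemma map_mem {P : List E → Prop} {M : Type} [AddCommGroup M] [Module (ZMod 2) M]
    (A : Ch E →ₗ[ZMod 2] M) (Q : Submodule (ZMod 2) M)
    (h : ∀ l, P l → A (sg l) ∈ Q) {c : Ch E} (hc : c ∈ Sup P) : A c ∈ Q := by
  have : Sup P ≤ Q.comap A := by
    apply Submodule.span_le.2
    rintro _ ⟨l, hl, rfl⟩
    exact h l hl
  exact this hc

lemma eq_on {P : List E → Prop} {M : Type} [AddCommGroup M] [Module (ZMod 2) M]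
    (A B : Ch E →ₗ[ZMod 2] M)
    (h : ∀ l, P l → A (sg l) = B (sg l)) {c : Ch E} (hc : c ∈ Sup P) : A c = B c := by
  have := map_mem (A - B) ⊥ (fun l hl => by simp [h l hl]) hc
  simpa [sub_eq_zero] using this

lemma phi_T (S : Set E) (T : E → E) (hu : ∀ k, ∀ x ∈ S, u k (T x) = u k x + 1) (k : ℕ)
    {P : List E → Prop} (hP : ∀ l, P l → ∀ x ∈ l, x ∈ S) {c : Ch E} (hc : c ∈ Sup P) :
    phi u k (c + mp T c) = psi u k c := by
  have := eq_on (phi u k + phi u k ∘ₗ mp T) (psi u k) ?_ hc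
  · simpa using this
  intro l hl
  have h1 := psi_map u S T hu k l (hP l hl)
  simp only [LinearMap.add_apply, LinearMap.comp_apply, mp_sg]
  match l, hl with
  | [], _ => simp [phi_nil, psi_nil]
  | x :: l, hl =>
    simp only [List.map_cons] at h1 ⊢
    rw [phi_cons, phi_cons, h1, hu k x (hP _ hl x (by simp))]
    have := two (u k x)
    linear_combination (psi u k (sg (x :: l))) * this


/-- abstract filling by a discrete homotopy -/
lemma homot (h : ℕ → E → F) (P : List E → Prop) (Q : List F → Prop)
    (hQ : ∀ k l, P l → pr (h k) (h (k+1)) (sg l) ∈ Sup Q)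
    {z : Ch E} (hz : z ∈ Sup P) (hbz : bd z = 0) (N : ℕ) :
    ∃ c ∈ Sup Q, bd c = mp (h 0) z + mp (h N) z := by
  induction N with
  | zero => exact ⟨0, Submodule.zero_mem _, by simp [two]⟩
  | succ k ih =>
    obtain ⟨c, hc, hb⟩ := ih
    refine ⟨c + pr (h k) (h (k+1)) z, Submodule.add_mem _ hc (map_mem _ _ (hQ k) hz), ?_⟩
    have := bd_pr (h k) (h (k+1)) z
    rw [hbz, map_zero, add_zero] at this
    rw [map_add, hb, this]
    have := two (mp (h k) z)
    linear_combination (norm := abel) this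

/-- small lists in a set -/
def Small {E : Type} [PseudoMetricSpace E] (S : Set E) (ε : ℝ) (l : List E) : Prop :=
  ∀ x ∈ l, x ∈ S ∧ ∀ y ∈ l, dist x y ≤ ε

lemma pr_small {E F : Type} [PseudoMetricSpace F] (S : Set F) (ε : ℝ)
    (f g : E → F) (l : List E) (h : ∀ l' : List F, (∀ y ∈ l', ∃ x ∈ l, y = f x ∨ y = g x) → Small S ε l') :
    pr f g (sg l) ∈ Sup (Small S ε) := by
  suffices H : pr f g (sg l) ∈ Sup (fun l' : List F => ∀ y ∈ l', ∃ x ∈ l, y = f x ∨ y = g x) by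
    exact map_mem LinearMap.id _ (fun l' hl' => sg_mem (h l' hl')) H
  clear h
  induction l with
  | nil => rw [pr_nil]; exact Submodule.zero_mem _
  | cons a l ih =>
    rw [pr_cons]
    apply Submodule.add_mem
    · apply sg_mem
      intro y hy
      simp only [List.mem_cons, List.mem_map] at hy
      rcases hy with rfl | rfl | ⟨b, hb, rfl⟩
      · exact ⟨a, by simp, by simp⟩
      · exact ⟨a, by simp, by simp⟩
      · exact ⟨b, by simp [hb], by simp⟩
    · refine map_mem _ _ ?_ ih
      intro l' hl'
      rw [cone_sg]
      apply sg_mem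
      intro y hy
      simp only [List.mem_cons] at hy
      rcases hy with rfl | hy
      · exact ⟨a, by simp, by simp⟩
      · obtain ⟨x, hx, h⟩ := hl' y hy
        exact ⟨x, by simp [hx], h⟩

end

section
variable {d : ℕ}

/-- the j-dimensional cross-polytope boundary -/
def X (d j : ℕ) : Set (Fin d → ℝ) := {x | ∑ i, |x i| = 1 ∧ ∀ i : Fin d, j < i.1 → x i = 0}

/-- contraction -/
def ct (p : Fin d → ℝ) (t : ℝ) (x : Fin d → ℝ) : Fin d → ℝ := fun i => x i + t * (p i - x i)

lemma ct_mem {j : ℕ} (hj : j + 1 < d) {t : ℝ} (h0 : 0 ≤ t) (h1 : t ≤ 1) {x : Fin d → ℝ}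
    (hx : x ∈ X d j) : ct (Pi.single ⟨j+1, hj⟩ 1) t x ∈ X d (j+1) := by
  obtain ⟨hs, hz⟩ := hx
  refine ⟨?_, ?_⟩
  · have : ∀ i, |ct (Pi.single ⟨j+1, hj⟩ 1) t x i| =
        (1 - t) * |x i| + t * (Pi.single (M := fun _ => ℝ) ⟨j+1, hj⟩ 1 : Fin d → ℝ) i := by
      intro i
      by_cases hi : i = ⟨j+1, hj⟩
      · subst hi
        have := hz ⟨j+1, hj⟩ (by simp)
        simp [ct, this, abs_of_nonneg h0]
      · simp only [ct, Pi.single_eq_of_ne hi, mul_zero, add_zero]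
        have e : x i + t * (0 - x i) = (1 - t) * x i := by ring
        rw [e, abs_mul, abs_of_nonneg (sub_nonneg.2 h1)]
    rw [Finset.sum_congr rfl (fun i _ => this i), Finset.sum_add_distrib, ← Finset.mul_sum,
      ← Finset.mul_sum, hs, Finset.sum_pi_single']
    simp
  · intro i hi
    have h2 : i ≠ ⟨j+1, hj⟩ := by rintro rfl; simp at hi
    simp [ct, Pi.single_eq_of_ne h2, hz i (by omega)]

lemma X_le_one {j : ℕ} {x : Fin d → ℝ} (hx : x ∈ X d j) (i : Fin d) : |x i| ≤ 1 := by
  rw [← hx.1]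
  exact Finset.single_le_sum (f := fun i => |x i|) (fun i _ => abs_nonneg _) (Finset.mem_univ i)

lemma ct_dist {j : ℕ} (hj : j + 1 < d) {t s δ : ℝ} (h0 : 0 ≤ t) (h1 : t ≤ 1) (hts : |t - s| ≤ δ)
    {x y : Fin d → ℝ} {ε : ℝ} (hε : dist x y ≤ ε) (hε0 : 0 ≤ ε)
    (hy : y ∈ X d j) : dist (ct (Pi.single ⟨j+1, hj⟩ 1) t x) (ct (Pi.single ⟨j+1, hj⟩ 1) s y)
      ≤ ε + δ * 2 := by
  have hδ : 0 ≤ δ := (abs_nonneg _).trans hts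
  rw [dist_pi_le_iff (by positivity)]
  intro i
  have hd : |x i - y i| ≤ ε := by
    have := (dist_le_pi_dist x y i).trans hε
    rwa [Real.dist_eq] at this
  have hp : |(Pi.single (M := fun _ => ℝ) ⟨j+1, hj⟩ 1 : Fin d → ℝ) i| ≤ 1 := by
    by_cases hi : i = ⟨j+1, hj⟩
    · subst hi; simp
    · simp [Pi.single_eq_of_ne hi]
  have hyi := X_le_one hy i
  rw [Real.dist_eq]
  simp only [ct]
  generalize (Pi.single (M := fun _ => ℝ) ⟨j+1, hj⟩ 1 : Fin d → ℝ) i = q at *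
  have : x i + t * (q - x i) - (y i + s * (q - y i)) =
    (1 - t) * (x i - y i) + (t - s) * (q - y i) := by ring
  rw [this]
  refine (abs_add_le _ _).trans ?_
  rw [abs_mul, abs_mul, abs_of_nonneg (sub_nonneg.2 h1)]
  have h3 : |q - y i| ≤ 2 := (abs_sub _ _).trans (by linarith)
  gcongr
  nlinarith [abs_nonneg (x i - y i)]

lemma X_neg {j : ℕ} {x : Fin d → ℝ} (hx : x ∈ X d j) : -x ∈ X d j := by
  obtain ⟨h1, h2⟩ := hx
  refine ⟨by simpa using h1, fun i hi => ?_⟩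
  rw [Pi.neg_apply, h2 i hi, neg_zero]

lemma fill {j : ℕ} (hj : j + 1 < d) {ε : ℝ} (hε : 0 < ε) {z : Ch (Fin d → ℝ)}
    (hz : z ∈ Sup (Small (X d j) (ε / 2))) (hb : bd z = 0) :
    ∃ c ∈ Sup (Small (X d (j+1)) ε), bd c = z := by
  obtain ⟨N, hN⟩ := exists_nat_gt (4 / ε)
  have hN0 : (0:ℝ) < N := lt_trans (by positivity) hN
  set p : Fin d → ℝ := Pi.single ⟨j+1, hj⟩ 1 with hp
  let h : ℕ → (Fin d → ℝ) → (Fin d → ℝ) := fun k => ct p (min 1 (k / N))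
  have ht0 : ∀ k : ℕ, (0:ℝ) ≤ min 1 ((k:ℝ) / N) := fun k => le_min (by norm_num) (by positivity)
  have ht1 : ∀ k : ℕ, min 1 ((k:ℝ) / N) ≤ 1 := fun k => min_le_left _ _
  have hst : ∀ k : ℕ, |min 1 ((k:ℝ) / N) - min 1 (((k+1 : ℕ):ℝ)/N)| ≤ 1 / N := by
    intro k
    refine (abs_min_sub_min_le_max _ _ _ _).trans ?_
    rw [sub_self, abs_zero, ← sub_div]
    push_cast
    rw [abs_div, abs_of_pos hN0]
    simp
  have hN2 : (1:ℝ) / N * 2 ≤ ε / 2 := by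
    rw [div_lt_iff₀ hε] at hN
    rw [div_mul_eq_mul_div, div_le_iff₀ hN0]
    linarith
  have key : ∀ k l, Small (X d j) (ε/2) l → pr (h k) (h (k+1)) (sg l) ∈ Sup (Small (X d (j+1)) ε) := by
    intro k l hl
    apply pr_small
    intro l' hl' y hy
    refine ⟨?_, ?_⟩
    · obtain ⟨x, hx, rfl | rfl⟩ := hl' y hy
      · exact ct_mem hj (ht0 _) (ht1 _) (hl x hx).1
      · exact ct_mem hj (ht0 _) (ht1 _) (hl x hx).1
    · intro y' hy'
      obtain ⟨x, hx, hyx⟩ := hl' y hy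
      obtain ⟨x', hx', hyx'⟩ := hl' y' hy'
      have hd := (hl x hx).2 x' hx'
      have hm := (hl x' hx').1
      have hp : (0:ℝ) ≤ 1 / N := by positivity
      have fin : ∀ k k' : ℕ, |min 1 ((k:ℝ) / N) - min 1 ((k' : ℝ)/N)| ≤ 1 / N →
          dist (h k x) (h k' x') ≤ ε := by
        intro k k' hk
        have := ct_dist hj (ht0 k) (ht1 k) hk hd (by positivity) hm
        exact this.trans (by linarith)
      rcases hyx with rfl | rfl <;> rcases hyx' with rfl | rfl
      · exact fin _ _ (by simpa using hp)
      · exact fin _ _ (hst k)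
      · exact fin _ _ (by rw [abs_sub_comm]; exact hst k)
      · exact fin _ _ (by simpa using hp)
  obtain ⟨c, hc, hbc⟩ := homot h _ _ key hz hb N
  have hid : mp (h 0) z = z := mp_id _ (fun x => by ext i; simp [h, ct]) z
  have hNp : ∀ x, h N x = p := by
    intro x; ext i
    simp [h, ct, div_self hN0.ne']
  refine ⟨c + cone p (mp (h N) z), Submodule.add_mem _ hc ?_, ?_⟩
  · refine map_mem (cone p ∘ₗ mp (h N)) _ ?_ hz
    intro l hl
    simp only [LinearMap.comp_apply, mp_sg, cone_sg]
    apply sg_mem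
    have hall : ∀ x ∈ p :: l.map (h N), x = p := by
      intro x hx
      simp only [List.mem_cons, List.mem_map] at hx
      rcases hx with rfl | ⟨y, _, rfl⟩
      · rfl
      · exact hNp y
    intro x hx
    rw [hall x hx]
    refine ⟨⟨?_, ?_⟩, ?_⟩
    · have : ∀ i, |p i| = p i := by
        intro i
        apply abs_of_nonneg
        by_cases hi : i = ⟨j+1, hj⟩
        · subst hi; simp [hp]
        · simp [hp, Pi.single_eq_of_ne hi]
      simp only [this]
      simp [hp]
    · intro i hi
      have h2 : i ≠ ⟨j+1, hj⟩ := by rintro rfl; simp at hi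
      simp [hp, Pi.single_eq_of_ne h2]
    · intro y hy
      rw [hall y hy, dist_self]; exact hε.le
  · rw [map_add, hbc, bd_cone, bd_mp, hb, map_zero, map_zero, add_zero, hid, add_assoc, two, add_zero]

lemma chains (u : ℕ → (Fin d → ℝ) → ZMod 2)
    (hu : ∀ k x, (∑ i, |x i| = 1) → u k (-x) = u k x + 1) (j : ℕ) (hj : j < d) :
    ∀ ε > 0, ∃ c ∈ Sup (Small (X d j) ε), bd c + mp (fun x => -x) (bd c) = 0 ∧ psi u j c = 1 := by
  induction j with
  | zero =>
    intro ε hε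
    refine ⟨sg [Pi.single ⟨0, hj⟩ 1], sg_mem ?_, ?_, psi_zero_one _ _⟩
    · intro x hx
      simp only [List.mem_singleton] at hx ⊢
      subst hx
      refine ⟨⟨?_, ?_⟩, ?_⟩
      · rw [Finset.sum_eq_single ⟨0, hj⟩]
        · simp
        · intro b _ hb; simp [Pi.single_eq_of_ne hb]
        · simp
      · intro i hi
        have h2 : i ≠ ⟨0, hj⟩ := by rintro rfl; simp at hi
        simp [Pi.single_eq_of_ne h2]
      · rintro y rfl; simp [hε.le]
    · rw [bd_cons, bd_nil, map_zero, add_zero, mp_sg, List.map_nil, two]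
  | succ j ih =>
    intro ε hε
    obtain ⟨c, hc, hb, hpsi⟩ := ih (by omega) (ε/2) (by positivity)
    have hz : c + mp (fun x => -x) c ∈ Sup (Small (X d j) (ε / 2)) := by
      refine Submodule.add_mem _ hc (map_mem _ _ ?_ hc)
      intro l hl
      rw [mp_sg]
      apply sg_mem
      intro x hx
      simp only [List.mem_map] at hx
      obtain ⟨x, hx, rfl⟩ := hx
      refine ⟨X_neg (hl x hx).1, ?_⟩
      intro y hy
      simp only [List.mem_map] at hy
      obtain ⟨y, hy, rfl⟩ := hy
      rw [dist_neg_neg]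
      exact (hl x hx).2 y hy
    obtain ⟨c', hc', hb'⟩ := fill hj hε hz (by rw [map_add, bd_mp, hb])
    refine ⟨c', hc', ?_, ?_⟩
    · have e : mp (fun x => -x) (mp (fun x => -x) c) = c := by
        rw [mp_mp]; exact mp_id _ (fun x => by simp) c
      rw [hb', map_add, e]
      generalize mp (fun x => -x) c = c2
      have h1 := two c
      have h2 := two c2
      linear_combination (norm := abel) h1 + h2
    · rw [psi_succ, hb', phi_T u {x | ∑ i, |x i| = 1} _ hu j _ hc, hpsi]
      intro l hl x hx
      exact (hl x hx).1.1

lemma psi_ne {E : Type} (u : ℕ → E → ZMod 2) (k : ℕ) : ∀ l : List E, psi u k (sg l) ≠ 0 →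
    l ≠ [] ∧ ∀ i < k, ∃ x ∈ l, ∃ y ∈ l, u i x ≠ u i y := by
  induction k with
  | zero =>
    intro l hl
    refine ⟨?_, by simp⟩
    rintro rfl
    exact hl (psi_nil _ _)
  | succ k ih =>
    intro l hl
    match l, hl with
    | [], hl => exact absurd (psi_nil _ _) hl
    | [x], hl => exact absurd (psi_succ_one _ _ _) hl
    | x :: y :: l, hl =>
      rw [psi_succ_cons] at hl
      refine ⟨by simp, ?_⟩
      intro i hi
      rcases Nat.lt_succ_iff_lt_or_eq.1 hi with hi | rfl
      · obtain ⟨a, ha, b, hb, h⟩ := (ih _ (right_ne_zero_of_mul hl)).2 i hi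
        exact ⟨a, List.mem_cons_of_mem _ ha, b, List.mem_cons_of_mem _ hb, h⟩
      · refine ⟨x, by simp, y, by simp, ?_⟩
        intro h
        apply left_ne_zero_of_mul hl
        rw [h, two]

lemma exists_half (d : ℕ) : ∃ pos : (Fin d → ℝ) → Prop, ∀ x, x ≠ 0 → (pos (-x) ↔ ¬ pos x) := by
  refine ⟨fun x => (0 : Lex (Fin d → ℝ)) < toLex x, ?_⟩
  intro x hx
  have h0 : toLex x ≠ 0 := by simpa using hx
  have h1 : ¬ (0 : Lex (Fin d → ℝ)) < toLex x ↔ toLex x ≤ 0 := not_lt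
  have h2 : (0 : Lex (Fin d → ℝ)) < - toLex x ↔ toLex x < 0 := neg_pos
  change (0 : Lex (Fin d → ℝ)) < - toLex x ↔ ¬ (0 : Lex (Fin d → ℝ)) < toLex x
  refine h2.trans (Iff.trans ?_ h1.symm)
  exact ⟨fun h => h.le, fun h => lt_of_le_of_ne h h0⟩

theorem borsuk_ulam (m : ℕ) (g : Fin m → (Fin (m+1) → ℝ) → ℝ) (hg : ∀ i, Continuous (g i))
    (hodd : ∀ i x, g i (-x) = - g i x) : ∃ x, ∑ i, |x i| = 1 ∧ ∀ i, g i x = 0 := by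
  classical
  set S : Set (Fin (m+1) → ℝ) := {x | ∑ i, |x i| = 1} with hS
  have hSc : IsCompact S := by
    apply Metric.isCompact_of_isClosed_isBounded
    · exact isClosed_eq (by fun_prop) continuous_const
    · rw [Metric.isBounded_iff_subset_closedBall 0]
      refine ⟨1, fun x hx => ?_⟩
      rw [mem_closedBall_zero_iff, pi_norm_le_iff_of_nonneg zero_le_one]
      intro i
      rw [← hx]
      exact Finset.single_le_sum (f := fun i => |x i|) (fun i _ => abs_nonneg _) (Finset.mem_univ i)
  obtain ⟨pos, hpos⟩ := exists_half (m+1)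
  let u : ℕ → (Fin (m+1) → ℝ) → ZMod 2 := fun k x =>
    if h : k < m then (if 0 < g ⟨k, h⟩ x ∨ (g ⟨k, h⟩ x = 0 ∧ pos x) then 1 else 0)
    else (if pos x then 1 else 0)
  have hu : ∀ k x, (∑ i, |x i| = 1) → u k (-x) = u k x + 1 := by
    intro k x hx
    have hx0 : x ≠ 0 := by rintro rfl; simp at hx
    have hp := hpos x hx0
    have h11 : (1 : ZMod 2) + 1 = 0 := rfl
    by_cases h : k < m
    · simp only [u, h, dite_true, hodd, hp]
      rcases lt_trichotomy (g ⟨k, h⟩ x) 0 with h1 | h1 | h1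
      · have h2 := h1.not_gt
        simp [h1, h2, h1.ne]
      · by_cases h3 : pos x <;> simp [h1, h3, h11]
      · have h2 := h1.not_gt
        simp [h1, h2, h1.ne', h11]
    · simp only [u, h, dite_false, hp]
      by_cases h3 : pos x <;> simp [h3, h11]
  have approx : ∀ ω > 0, ∃ x ∈ S, ∀ i, |g i x| ≤ ω := by
    intro ω hω
    have huc : ∀ i, ∃ δ > 0, ∀ x ∈ S, ∀ y ∈ S, dist x y < δ → dist (g i x) (g i y) < ω := by
      intro i
      have := hSc.uniformContinuousOn_of_continuous (hg i).continuousOn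
      rw [Metric.uniformContinuousOn_iff] at this
      exact this ω hω
    choose δ hδ hδ' using huc
    obtain ⟨ε, hε, hεδ⟩ : ∃ ε > 0, ∀ i, ε < δ i := by
      rcases isEmpty_or_nonempty (Fin m) with he | he
      · exact ⟨1, one_pos, fun i => he.elim i⟩
      · obtain ⟨i0, hi0⟩ := Finite.exists_min δ
        exact ⟨δ i0 / 2, half_pos (hδ _), fun i => (half_lt_self (hδ _)).trans_le (hi0 i)⟩
    obtain ⟨c, hc, -, hpsi⟩ := chains u hu m (Nat.lt_succ_self m) ε hε
    obtain ⟨l, hl, hne⟩ : ∃ l, Small (X (m+1) m) ε l ∧ psi u m (sg l) ≠ 0 := by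
      by_contra hcon
      push Not at hcon
      have := eq_on (psi u m) 0 (fun l hl => by simpa using hcon l hl) hc
      rw [hpsi] at this
      simp at this
    obtain ⟨hl0, hch⟩ := psi_ne u m l hne
    obtain ⟨a, ha⟩ := List.exists_mem_of_ne_nil l hl0
    refine ⟨a, (hl a ha).1.1, ?_⟩
    intro i
    obtain ⟨x, hx, y, hy, hxy⟩ := hch i.1 i.2
    have hax := hδ' i a (hl a ha).1.1 x (hl x hx).1.1 (((hl a ha).2 x hx).trans_lt (hεδ i))
    have hay := hδ' i a (hl a ha).1.1 y (hl y hy).1.1 (((hl a ha).2 y hy).trans_lt (hεδ i))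
    rw [Real.dist_eq, abs_lt] at hax hay
    simp only [u, i.2, dite_true] at hxy
    rw [abs_le]
    by_contra hcon
    have hsame : (0 < g i x ∧ 0 < g i y) ∨ (g i x < 0 ∧ g i y < 0) := by
      by_cases h : g i a ≤ ω
      · right
        have : g i a < -ω := by
          by_contra h'; exact hcon ⟨not_lt.1 h', h⟩
        constructor <;> linarith
      · left
        constructor <;> linarith
    rcases hsame with ⟨h1, h2⟩ | ⟨h1, h2⟩
    · simp [h1, h2] at hxy
    · simp [h1.not_gt, h2.not_gt, h1.ne, h2.ne] at hxy
  have hSne : S.Nonempty := by obtain ⟨x, hx, _⟩ := approx 1 one_pos; exact ⟨x, hx⟩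
  obtain ⟨x, hx, hmin⟩ := hSc.exists_isMinOn hSne
    (f := fun x => ∑ i, |g i x|) (Continuous.continuousOn (by fun_prop))
  refine ⟨x, hx, ?_⟩
  by_contra hcon
  push Not at hcon
  obtain ⟨i, hi⟩ := hcon
  have hpos' : 0 < ∑ i, |g i x| :=
    Finset.sum_pos' (fun i _ => abs_nonneg _) ⟨i, Finset.mem_univ _, abs_pos.2 hi⟩
  obtain ⟨y, hy, hyi⟩ := approx ((∑ i, |g i x|) / (m + 1)) (by positivity)
  have h1 := hmin hy
  simp only [Set.mem_ofPred_eq] at h1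
  have h2 : ∑ i, |g i y| ≤ ∑ _i : Fin m, (∑ i, |g i x|) / (m + 1) := Finset.sum_le_sum (fun i _ => hyi i)
  rw [Finset.sum_const, Finset.card_univ, Fintype.card_fin, nsmul_eq_mul] at h2
  have h3 : (m:ℝ) * ((∑ i, |g i x|) / (m + 1)) < ∑ i, |g i x| := by
    rw [mul_div_assoc', div_lt_iff₀ (by positivity)]
    nlinarith
  linarith
end
end BU

lemma BU.width_cont {n : ℕ} {K : Set (EuclideanSpace ℝ (Fin n))} (hK : IsCompact K) :
    Continuous (dirWidth K) := by
  unfold dirWidth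
  have hf : Continuous (Function.uncurry
      (fun (v x : EuclideanSpace ℝ (Fin n)) => ⟪x, v⟫)) := by
    unfold Function.uncurry; fun_prop
  exact (hK.continuous_sSup hf).sub (hK.continuous_sInf hf)

open scoped Pointwise in
lemma BU.width_smul {n : ℕ} (K : Set (EuclideanSpace ℝ (Fin n))) {c : ℝ} (hc : 0 ≤ c)
    (v : EuclideanSpace ℝ (Fin n)) : dirWidth K (c • v) = c * dirWidth K v := by
  unfold dirWidth
  have : (fun x => ⟪x, c • v⟫) '' K = c • ((fun x => ⟪x, v⟫) '' K) := by
    rw [← Set.image_smul, Set.image_image]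
    simp [inner_smul_right]
  rw [this, Real.sSup_smul_of_nonneg hc, Real.sInf_smul_of_nonneg hc, smul_eq_mul, smul_eq_mul]
  ring

/-- Given `n - 2` nonempty compact convex regions in `ℝⁿ` (`n ≥ 2`), there exist
orthonormal vectors `v₁, v₂` such that each region has equal widths in the
directions `v₁` and `v₂`. -/
theorem squares_inscribe_one (n : ℕ) (hn : 2 ≤ n)
    (K : Fin (n - 2) → Set (EuclideanSpace ℝ (Fin n)))
    (hne : ∀ i, (K i).Nonempty) (hcpt : ∀ i, IsCompact (K i))
    (hconv : ∀ i, Convex ℝ (K i)) :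
    ∃ v₁ v₂ : EuclideanSpace ℝ (Fin n),
      ‖v₁‖ = 1 ∧ ‖v₂‖ = 1 ∧ ⟪v₁, v₂⟫ = 0 ∧
      ∀ i, dirWidth (K i) v₁ = dirWidth (K i) v₂ := by
  obtain ⟨m, rfl⟩ := Nat.exists_eq_add_of_le' hn
  let r : (Fin (m+1) → ℝ) → ℝ := fun b => Real.sqrt (∑ i, b i ^ 2)
  let V : ℝ → (Fin (m+1) → ℝ) → EuclideanSpace ℝ (Fin (m+2)) := fun t b =>
    WithLp.toLp 2 (Fin.cons t b : Fin (m+2) → ℝ)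
  have hr : Continuous r := by fun_prop
  have hrn : ∀ b, r (-b) = r b := fun b => by simp [r]
  have hV : ∀ f : (Fin (m+1) → ℝ) → (Fin (m+1) → ℝ), Continuous f →
      Continuous (fun b => V (r b) (f b)) := by
    intro f hf
    refine (PiLp.continuous_toLp 2 _).comp ?_
    exact Continuous.finCons hr hf
  obtain ⟨b, hb, hz⟩ := BU.borsuk_ulam m
    (fun i b => dirWidth (K i) (V (r b) b) - dirWidth (K i) (V (r b) (-b)))
    (fun i => ((BU.width_cont (hcpt i)).comp (hV _ continuous_id)).sub
      ((BU.width_cont (hcpt i)).comp (hV _ continuous_neg)))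
    (fun i b => by simp [hrn])
  have hb0 : 0 < ∑ i, b i ^ 2 := by
    by_contra h
    have h0 : ∑ i, b i ^ 2 = 0 := le_antisymm (not_lt.1 h) (Finset.sum_nonneg fun i _ => sq_nonneg _)
    rw [Finset.sum_eq_zero_iff_of_nonneg (fun i _ => sq_nonneg _)] at h0
    have : ∀ i, b i = 0 := fun i => by simpa using h0 i (Finset.mem_univ i)
    simp [this] at hb
  have hr2 : r b ^ 2 = ∑ i, b i ^ 2 := Real.sq_sqrt hb0.le
  have hrp : 0 < r b := Real.sqrt_pos.2 hb0
  have hn1 : ∀ c : Fin (m+1) → ℝ, (∑ i, c i ^ 2 = ∑ i, b i ^ 2) →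
      ‖V (r b) c‖ = Real.sqrt 2 * r b := by
    intro c hc
    rw [EuclideanSpace.norm_eq, Fin.sum_univ_succ]
    simp only [V, Fin.cons_zero, Fin.cons_succ, Real.norm_eq_abs, sq_abs]
    rw [hc, ← hr2, ← two_mul, Real.sqrt_mul (by norm_num), Real.sqrt_sq hrp.le]
  have hsp : 0 < Real.sqrt 2 * r b := by positivity
  refine ⟨(Real.sqrt 2 * r b)⁻¹ • V (r b) b, (Real.sqrt 2 * r b)⁻¹ • V (r b) (-b), ?_, ?_, ?_, ?_⟩
  · rw [norm_smul, hn1 b rfl, Real.norm_of_nonneg (by positivity), inv_mul_cancel₀ hsp.ne']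
  · rw [norm_smul, hn1 (-b) (by simp), Real.norm_of_nonneg (by positivity), inv_mul_cancel₀ hsp.ne']
  · rw [inner_smul_left, inner_smul_right]
    have : ⟪V (r b) b, V (r b) (-b)⟫ = 0 := by
      rw [PiLp.inner_apply, Fin.sum_univ_succ]
      simp only [V, Fin.cons_zero, Fin.cons_succ, RCLike.inner_apply, conj_trivial, Pi.neg_apply]
      simp only [neg_mul, Finset.sum_neg_distrib, ← sq, hr2]
      ring
    rw [this]; simp
  · intro i
    rw [BU.width_smul _ (by positivity), BU.width_smul _ (by positivity), sub_eq_zero.1 (hz i)]
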